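/- arXiv:2506.22319 — 4 statements merged into one kernel-verified Lean document; each statement's English description precedes it below -/
import Mathlib

section
/- Let G be the subgroup of GL(3,ℝ) generated by the six matrices D_x, D_y, D_z, S_xy, S_yz, S_zx, let p₀ = (1,2,3) ∈ ℝ³, and let Q be a real symmetric 3×3 matrix. If there is a constant c ∈ ℝ such that (A p₀) · Q (A p₀) = c ‖p₀‖² for every A ∈ G, then Q = c · I. (Equivalently, the linear system obtained by evaluating the quadratic form of an unknown symmetric matrix on the 48-point orbit of (1,2,3) under the cubic symmetry group has rank 6, so its unique solution is the scalar matrix c I.) -/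
open Matrix

/-- `D_x = diag(-1,1,1)` -/
def Dx : Matrix (Fin 3) (Fin 3) ℝ := !![-1, 0, 0; 0, 1, 0; 0, 0, 1]
/-- `D_y = diag(1,-1,1)` -/
def Dy : Matrix (Fin 3) (Fin 3) ℝ := !![1, 0, 0; 0, -1, 0; 0, 0, 1]
/-- `D_z = diag(1,1,-1)` -/
def Dz : Matrix (Fin 3) (Fin 3) ℝ := !![1, 0, 0; 0, 1, 0; 0, 0, -1]
/-- `S_xy` exchanges coordinates 1 and 2 -/
def Sxy : Matrix (Fin 3) (Fin 3) ℝ := !![0, 1, 0; 1, 0, 0; 0, 0, 1]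
/-- `S_yz` exchanges coordinates 2 and 3 -/
def Syz : Matrix (Fin 3) (Fin 3) ℝ := !![1, 0, 0; 0, 0, 1; 0, 1, 0]
/-- `S_zx` exchanges coordinates 3 and 1 -/
def Szx : Matrix (Fin 3) (Fin 3) ℝ := !![0, 0, 1; 0, 1, 0; 1, 0, 0]

/-- The point `p₀ = (1,2,3)`. -/
def p₀ : Fin 3 → ℝ := ![1, 2, 3]

/-- The cubic symmetry group: the subgroup of invertible `3 × 3` real matrices generated by
the six matrices `D_x, D_y, D_z, S_xy, S_yz, S_zx`. -/
def cubicGroup : Subgroup (Matrix (Fin 3) (Fin 3) ℝ)ˣ :=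
  Subgroup.closure
    {A : (Matrix (Fin 3) (Fin 3) ℝ)ˣ |
      (A : Matrix (Fin 3) (Fin 3) ℝ) ∈ ({Dx, Dy, Dz, Sxy, Syz, Szx} :
        Set (Matrix (Fin 3) (Fin 3) ℝ))}

lemma exists_unit_of_gen (M : Matrix (Fin 3) (Fin 3) ℝ) (hM : M * M = 1)
    (hm : M ∈ ({Dx, Dy, Dz, Sxy, Syz, Szx} : Set (Matrix (Fin 3) (Fin 3) ℝ))) :
    ∃ A ∈ cubicGroup, (A : Matrix (Fin 3) (Fin 3) ℝ) = M :=
  ⟨⟨M, M, hM, hM⟩, Subgroup.subset_closure hm, rfl⟩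

/-- If a real symmetric `3 × 3` matrix `Q` satisfies `(A p₀) ⬝ Q (A p₀) = c ‖p₀‖²` for every
element `A` of the cubic symmetry group, where `p₀ = (1,2,3)`, then `Q = c • I`. -/
theorem symm_matrix_eq_smul_one_of_orbit_quadratic_form
    (Q : Matrix (Fin 3) (Fin 3) ℝ) (hQ : Q.IsSymm) (c : ℝ)
    (h : ∀ A ∈ cubicGroup,
      ((A : Matrix (Fin 3) (Fin 3) ℝ) *ᵥ p₀) ⬝ᵥ (Q *ᵥ ((A : Matrix (Fin 3) (Fin 3) ℝ) *ᵥ p₀))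
        = c * (p₀ ⬝ᵥ p₀)) :
    Q = c • (1 : Matrix (Fin 3) (Fin 3) ℝ) := by
  have key : ∀ M : Matrix (Fin 3) (Fin 3) ℝ, M * M = 1 →
      M ∈ ({Dx, Dy, Dz, Sxy, Syz, Szx} : Set (Matrix (Fin 3) (Fin 3) ℝ)) →
      (M *ᵥ p₀) ⬝ᵥ (Q *ᵥ (M *ᵥ p₀)) = c * (p₀ ⬝ᵥ p₀) := by
    intro M hM hm
    obtain ⟨A, hA, rfl⟩ := exists_unit_of_gen M hM hm
    exact h A hA
  have h0 := h 1 (one_mem _)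
  have h1 := key Dx (by ext i j; fin_cases i <;> fin_cases j <;> simp [Dx, Matrix.mul_apply, Fin.sum_univ_three]) (by simp)
  have h2 := key Dy (by ext i j; fin_cases i <;> fin_cases j <;> simp [Dy, Matrix.mul_apply, Fin.sum_univ_three]) (by simp)
  have h3 := key Dz (by ext i j; fin_cases i <;> fin_cases j <;> simp [Dz, Matrix.mul_apply, Fin.sum_univ_three]) (by simp)
  have h4 := key Sxy (by ext i j; fin_cases i <;> fin_cases j <;> simp [Sxy, Matrix.mul_apply, Fin.sum_univ_three]) (by simp)
  have h5 := key Syz (by ext i j; fin_cases i <;> fin_cases j <;> simp [Syz, Matrix.mul_apply, Fin.sum_univ_three]) (by simp)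
  have e1 : Q 1 0 = Q 0 1 := hQ.apply 0 1
  have e2 : Q 2 0 = Q 0 2 := hQ.apply 0 2
  have e3 : Q 2 1 = Q 1 2 := hQ.apply 1 2
  simp [p₀, Dx, Dy, Dz, Sxy, Syz, Matrix.mulVec, dotProduct, Fin.sum_univ_three, e1, e2, e3]
    at h0 h1 h2 h3 h4 h5
  ext i j
  fin_cases i <;> fin_cases j <;> simp [e1, e2, e3] <;> linarith
end

section
/- Let R : ℝ → ℝ be twice continuously differentiable, 2-periodic (R(x+2) = R(x) for all x), and strictly positive. Define c₃ = 2·(∫_{−1}^{1} √(1+R'(x)²)/R(x) dx)⁻¹ and s(x) = ∫_{1}^{x} (c₃·√(1+R'(ζ)²)/R(ζ) − 1) dζ. Then s is 2-periodic and satisfies the differential equation s''(x) + w(x)·s'(x) + w(x) = 0 for all x, where w(x) = R'(x)·(1 − R(x)R''(x) + R'(x)²) / (R(x)·(1 + R'(x)²)). -/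
open MeasureTheory intervalIntegral

/-- For a positive, 2-periodic, `C²` radius profile `R`, the function
`s(x) = ∫₁ˣ (c₃ √(1+R'(ζ)²)/R(ζ) − 1) dζ` with
`c₃ = 2 (∫_{−1}^{1} √(1+R'²)/R)⁻¹` is 2-periodic and solves
`s'' + w s' + w = 0`, where `w = R'(1 − R R'' + R'²)/(R (1 + R'²))`. -/
theorem revolution_ode_solution
    (R : ℝ → ℝ) (hR : ContDiff ℝ 2 R) (hper : ∀ x, R (x + 2) = R x) (hpos : ∀ x, 0 < R x)
    (c₃ : ℝ)
    (hc₃ : c₃ = 2 * (∫ x in (-1 : ℝ)..1, Real.sqrt (1 + (deriv R x) ^ 2) / R x)⁻¹)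
    (s w : ℝ → ℝ)
    (hs : ∀ x, s x = ∫ ζ in (1 : ℝ)..x, (c₃ * Real.sqrt (1 + (deriv R ζ) ^ 2) / R ζ - 1))
    (hw : ∀ x, w x = deriv R x * (1 - R x * deriv (deriv R) x + (deriv R x) ^ 2) /
      (R x * (1 + (deriv R x) ^ 2))) :
    (∀ x, s (x + 2) = s x) ∧
    (∀ x, deriv (deriv s) x + w x * deriv s x + w x = 0) := by
  have hRd : Differentiable ℝ R := hR.differentiable (by norm_num)
  have hR1 : ContDiff ℝ 1 (deriv R) := by
    have h2 : ContDiff ℝ (1 + 1) R := by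
      have : (1 + 1 : WithTop ℕ∞) = 2 := by norm_num
      rw [this]; exact hR
    exact (contDiff_succ_iff_deriv.mp h2).2.2
  have hdc : Continuous (deriv R) := hR1.continuous
  have hdd : Differentiable ℝ (deriv R) := hR1.differentiable (by norm_num)
  have hne : ∀ x, R x ≠ 0 := fun x => (hpos x).ne'
  have hq : ∀ x, 0 < 1 + (deriv R x) ^ 2 := fun x => by positivity
  have hfc : Continuous (fun x => Real.sqrt (1 + (deriv R x) ^ 2) / R x) :=
    Continuous.div (by fun_prop) hRd.continuous hne
  have hgc : Continuous (fun x => c₃ * Real.sqrt (1 + (deriv R x) ^ 2) / R x - 1) :=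
    (Continuous.div (by fun_prop) hRd.continuous hne).sub continuous_const
  have hsd : ∀ x, HasDerivAt s (c₃ * Real.sqrt (1 + (deriv R x) ^ 2) / R x - 1) x := by
    intro x
    have : s = fun x => ∫ ζ in (1 : ℝ)..x,
        (c₃ * Real.sqrt (1 + (deriv R ζ) ^ 2) / R ζ - 1) := funext hs
    rw [this]
    exact intervalIntegral.integral_hasDerivAt_right (hgc.intervalIntegrable _ _)
      hgc.stronglyMeasurable.stronglyMeasurableAtFilter hgc.continuousAt
  have hds : deriv s = fun x => c₃ * Real.sqrt (1 + (deriv R x) ^ 2) / R x - 1 :=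
    funext fun x => (hsd x).deriv
  have hdper : ∀ x, deriv R (x + 2) = deriv R x := by
    intro x
    rw [← deriv_comp_add_const]
    congr 1
    exact funext hper
  have hI : 0 < ∫ x in (-1 : ℝ)..1, Real.sqrt (1 + (deriv R x) ^ 2) / R x := by
    apply intervalIntegral.intervalIntegral_pos_of_pos (hfc.intervalIntegrable _ _)
    · intro x
      exact div_pos (Real.sqrt_pos.mpr (hq x)) (hpos x)
    · norm_num
  constructor
  · intro x
    have hgper : Function.Periodic
        (fun x => c₃ * Real.sqrt (1 + (deriv R x) ^ 2) / R x - 1) 2 := by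
      intro y
      simp only [hper, hdper]
    have h1 : ∫ ζ in x..(x + 2), (c₃ * Real.sqrt (1 + (deriv R ζ) ^ 2) / R ζ - 1) = 0 := by
      rw [hgper.intervalIntegral_add_eq x (-1)]
      have e : (-1 : ℝ) + 2 = 1 := by norm_num
      rw [e, intervalIntegral.integral_sub]
      · simp only [mul_div_assoc]
        rw [intervalIntegral.integral_const_mul, hc₃, mul_assoc, inv_mul_cancel₀ hI.ne']
        simp
        norm_num
      · simp only [mul_div_assoc]
        exact (continuous_const.mul hfc).intervalIntegrable _ _
      · exact intervalIntegrable_const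
    rw [hs, hs, ← intervalIntegral.integral_add_adjacent_intervals
      (hgc.intervalIntegrable 1 x) (hgc.intervalIntegrable x (x + 2)), h1, add_zero]
  · intro x
    have hR' := (hRd x).hasDerivAt
    have hR'' := (hdd x).hasDerivAt
    have hk := (((((hR''.pow 2).const_add 1).sqrt (hq x).ne').const_mul c₃).div hR'
      (hne x)).sub_const 1
    have hk2 := hk.deriv
    have e0 : deriv s = (fun x => ((fun y => c₃ * √(1 + (deriv R ^ 2) y)) / R) x - 1) := hds
    rw [← e0] at hk2
    rw [hk2, hds, hw]
    have hs0 : 0 < Real.sqrt (1 + (deriv R x) ^ 2) := Real.sqrt_pos.mpr (hq x)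
    have hsq : Real.sqrt (1 + (deriv R x) ^ 2) ^ 2 = 1 + (deriv R x) ^ 2 :=
      Real.sq_sqrt (hq x).le
    have hx := hne x
    have hqx := (hq x).ne'
    simp only [Pi.pow_apply]
    generalize Real.sqrt (1 + (deriv R x) ^ 2) = S at *
    generalize deriv (deriv R) x = B at *
    rw [← hsq] at hqx ⊢
    have e3 : (1 - R x * B + deriv R x ^ 2) = S ^ 2 - R x * B := by rw [hsq]; ring
    rw [e3]
    have := hs0.ne'
    field_simp
    ring
end

section
/- Let R : ℝ → ℝ be twice continuously differentiable, 2-periodic, and strictly positive, and set w(x) = R'(x)·(1 − R(x)R''(x) + R'(x)²) / (R(x)·(1 + R'(x)²)). If s : ℝ → ℝ is twice continuously differentiable, 2-periodic, and satisfies s''(x) + w(x)·s'(x) + w(x) = 0 for all x, then s'(x) = c₃·√(1 + R'(x)²)/R(x) − 1 for all x, where c₃ = 2·(∫_{−1}^{1} √(1+R'(x)²)/R(x) dx)⁻¹. -/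
open MeasureTheory intervalIntegral

/-- For a positive, 2-periodic, `C²` radius profile `R`, any 2-periodic `C²` solution `s` of
`s'' + w s' + w = 0`, where `w = R'(1 − R R'' + R'²)/(R (1 + R'²))`, has derivative
`s'(x) = c₃ √(1+R'(x)²)/R(x) − 1` with `c₃ = 2 (∫_{−1}^{1} √(1+R'²)/R)⁻¹`. -/
theorem revolution_ode_unique_deriv
    (R : ℝ → ℝ) (hR : ContDiff ℝ 2 R) (hper : ∀ x, R (x + 2) = R x) (hpos : ∀ x, 0 < R x)
    (w : ℝ → ℝ)
    (hw : ∀ x, w x = deriv R x * (1 - R x * deriv (deriv R) x + (deriv R x) ^ 2) /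
      (R x * (1 + (deriv R x) ^ 2)))
    (s : ℝ → ℝ) (hs : ContDiff ℝ 2 s) (hsper : ∀ x, s (x + 2) = s x)
    (hode : ∀ x, deriv (deriv s) x + w x * deriv s x + w x = 0) :
    ∀ x, deriv s x =
      2 * (∫ y in (-1 : ℝ)..1, Real.sqrt (1 + (deriv R y) ^ 2) / R y)⁻¹ *
        Real.sqrt (1 + (deriv R x) ^ 2) / R x - 1 := by
  have hR1 : ContDiff ℝ 1 (deriv R) := by
    have := (contDiff_succ_iff_deriv (n := 1) (f := R) (𝕜 := ℝ)).1 (by simpa [one_add_one_eq_two] using hR)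
    exact this.2.2
  have hs1 : ContDiff ℝ 1 (deriv s) := by
    have := (contDiff_succ_iff_deriv (n := 1) (f := s) (𝕜 := ℝ)).1 (by simpa [one_add_one_eq_two] using hs)
    exact this.2.2
  have hRd : ∀ x, HasDerivAt R (deriv R x) x := fun x =>
    (hR.differentiable (by norm_num) x).hasDerivAt
  have hsd : ∀ x, HasDerivAt s (deriv s x) x := fun x =>
    (hs.differentiable (by norm_num) x).hasDerivAt
  have hRdd : ∀ x, HasDerivAt (deriv R) (deriv (deriv R) x) x := fun x =>
    (hR1.differentiable (by norm_num) x).hasDerivAt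
  have hsdd : ∀ x, HasDerivAt (deriv s) (deriv (deriv s) x) x := fun x =>
    (hs1.differentiable (by norm_num) x).hasDerivAt
  have hApos : ∀ x, 0 < 1 + (deriv R x) ^ 2 := fun x => by positivity
  obtain ⟨g, hg⟩ : ∃ g : ℝ → ℝ, g = fun x => Real.sqrt (1 + (deriv R x) ^ 2) / R x := ⟨_, rfl⟩
  have hgpos : ∀ x, 0 < g x := fun x => by
    rw [hg]; exact div_pos (Real.sqrt_pos.2 (hApos x)) (hpos x)
  have hgd : ∀ x, HasDerivAt g (-(w x) * g x) x := by
    intro x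
    have h1 := (((hRdd x).pow 2).const_add 1).sqrt (hApos x).ne'
    have h2 := h1.div (hRd x) (hpos x).ne'
    rw [hg]
    refine h2.congr_deriv ?_
    have hS := Real.sqrt_pos.2 (hApos x)
    have hS2 := Real.sq_sqrt (hApos x).le
    have hp := hpos x
    have hA := hApos x
    simp only [hw, Pi.pow_apply]
    generalize Real.sqrt (1 + (deriv R x) ^ 2) = S at *
    rw [← hS2]
    field_simp
    have h3 : (deriv R x) ^ 2 = S ^ 2 - 1 := by linarith
    simp only [Nat.cast_ofNat, h3]
    ring
  have hq : ∀ x, HasDerivAt (fun x => (deriv s x + 1) / g x) 0 x := by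
    intro x
    refine (((hsdd x).add_const 1).div (hgd x) (hgpos x).ne').congr_deriv ?_
    have h := hode x
    have h4 : deriv (deriv s) x = -(w x * (deriv s x + 1)) := by linarith
    rw [h4]
    ring
  have hc : ∀ x, (deriv s x + 1) / g x = (deriv s 0 + 1) / g 0 := fun x =>
    is_const_of_deriv_eq_zero (fun y => (hq y).differentiableAt) (fun y => (hq y).deriv) x 0
  generalize (deriv s 0 + 1) / g 0 = c at hc
  have hy : ∀ x, deriv s x + 1 = c * g x := fun x => (div_eq_iff (hgpos x).ne').1 (hc x)
  have hgc : Continuous g := continuous_iff_continuousAt.2 fun x => (hgd x).continuousAt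
  have hI : ∫ y in (-1 : ℝ)..1, (deriv s y + 1) = 2 := by
    rw [integral_eq_sub_of_hasDerivAt (f := fun y => s y + y)
      (fun y _ => (hsd y).add (hasDerivAt_id y))
      ((hs1.continuous.add continuous_const).intervalIntegrable _ _)]
    have := hsper (-1)
    norm_num at this
    rw [this]; ring
  have hIg : c * ∫ y in (-1 : ℝ)..1, g y = 2 := by
    rw [← intervalIntegral.integral_const_mul, ← hI]
    simp only [hy]
  have hne : (∫ y in (-1 : ℝ)..1, g y) ≠ 0 := by
    intro h; rw [h] at hIg; norm_num at hIg
  intro x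
  have e : deriv s x = 2 * (∫ y in (-1 : ℝ)..1, g y)⁻¹ * g x - 1 := by
    rw [← hIg, mul_assoc c, mul_inv_cancel₀ hne, mul_one, ← hy]; ring
  rw [e, hg]
  ring
end

section
/- Let R : ℝ → ℝ be twice continuously differentiable, 2-periodic, and strictly positive. With c₃ = 2·(∫_{−1}^{1} √(1+R'(x)²)/R(x) dx)⁻¹ and s(x) = ∫_{1}^{x} (c₃·√(1+R'(ζ)²)/R(ζ) − 1) dζ, the following identity holds: (∫_{−1}^{1} (1 + s'(x))² · R(x) / √(1+R'(x)²) dx) / (∫_{−1}^{1} R(x)·√(1+R'(x)²) dx) = 4 · (∫_{−1}^{1} √(1+R'(x)²)/R(x) dx · ∫_{−1}^{1} R(x)·√(1+R'(x)²) dx)⁻¹. -/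
open MeasureTheory intervalIntegral

/-- Computational form of the asymptotic directional conductivity of a surface of revolution:
with `c₃ = 2 (∫_{−1}^{1} √(1+R'²)/R)⁻¹` and `s(x) = ∫₁ˣ (c₃ √(1+R'(ζ)²)/R(ζ) − 1) dζ`,
the ratio `(∫_{−1}^{1} (1+s')² R/√(1+R'²)) / (∫_{−1}^{1} R √(1+R'²))` equals
`4 (∫_{−1}^{1} √(1+R'²)/R · ∫_{−1}^{1} R √(1+R'²))⁻¹`. -/
theorem revolution_adc_value
    (R : ℝ → ℝ) (hR : ContDiff ℝ 2 R) (hper : ∀ x, R (x + 2) = R x) (hpos : ∀ x, 0 < R x)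
    (c₃ : ℝ)
    (hc₃ : c₃ = 2 * (∫ x in (-1 : ℝ)..1, Real.sqrt (1 + (deriv R x) ^ 2) / R x)⁻¹)
    (s : ℝ → ℝ)
    (hs : ∀ x, s x = ∫ ζ in (1 : ℝ)..x, (c₃ * Real.sqrt (1 + (deriv R ζ) ^ 2) / R ζ - 1)) :
    (∫ x in (-1 : ℝ)..1, (1 + deriv s x) ^ 2 * R x / Real.sqrt (1 + (deriv R x) ^ 2)) /
        (∫ x in (-1 : ℝ)..1, R x * Real.sqrt (1 + (deriv R x) ^ 2))
      = 4 * ((∫ x in (-1 : ℝ)..1, Real.sqrt (1 + (deriv R x) ^ 2) / R x) *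
          (∫ x in (-1 : ℝ)..1, R x * Real.sqrt (1 + (deriv R x) ^ 2)))⁻¹ := by
  have hd : Continuous (deriv R) := hR.continuous_deriv (by norm_num)
  have hq : Continuous (fun ζ => c₃ * Real.sqrt (1 + (deriv R ζ) ^ 2) / R ζ - 1) := by
    have h1 : Continuous (fun ζ => c₃ * Real.sqrt (1 + (deriv R ζ) ^ 2)) := by fun_prop
    exact (h1.div hR.continuous (fun x => (hpos x).ne')).sub continuous_const
  have hds : ∀ x, deriv s x = c₃ * Real.sqrt (1 + (deriv R x) ^ 2) / R x - 1 := by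
    intro x
    rw [funext hs]
    exact hq.deriv_integral _ 1 x
  have hint : (∫ x in (-1 : ℝ)..1, (1 + deriv s x) ^ 2 * R x / Real.sqrt (1 + (deriv R x) ^ 2))
      = c₃ ^ 2 * ∫ x in (-1 : ℝ)..1, Real.sqrt (1 + (deriv R x) ^ 2) / R x := by
    rw [← intervalIntegral.integral_const_mul]
    congr 1
    ext x
    have h1 := (hpos x).ne'
    have h2 : Real.sqrt (1 + (deriv R x) ^ 2) ≠ 0 := by positivity
    rw [hds x, add_sub_cancel]
    field_simp
  rw [hint, hc₃]
  generalize (∫ x in (-1 : ℝ)..1, Real.sqrt (1 + (deriv R x) ^ 2) / R x) = I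
  rcases eq_or_ne I 0 with h | h
  · simp [h]
  · rw [mul_inv]
    field_simp
    norm_num
end
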